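/- Let R be a commutative noetherian ring, C a semidualizing R-module, and M a nonzero finitely generated R-module. Assume M is G_C-perfect of grade g, that is: M admits a finite resolution 0 → G_g → ⋯ → G₁ → G₀ → M → 0 of length g by totally C-reflexive R-modules, and Ext^n_R(M, C) = 0 for all n ≠ g. Then the R-module Ext^g_R(M, C) is also G_C-perfect of grade g — it is finitely generated, admits a finite resolution of length g by totally C-reflexive R-modules, and satisfies Ext^n_R(Ext^g_R(M, C), C) = 0 for all n ≠ g — and there is an isomorphism of R-modules M ≅ Ext^g_R(Ext^g_R(M, C), C). -/

import Mathlib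

/-! **Statement 19** (Corollary 6.6(b)): duality for `G_C`-perfect modules. -/

open CategoryTheory CategoryTheory.Limits Opposite

universe u

variable (R : Type u) [CommRing R]

/-- The `R`-module `Ext^i_R(M, N)`, as an object of `ModuleCat R`. -/
noncomputable def extMod (i : ℕ) (M N : ModuleCat.{u} R) : ModuleCat.{u} R :=
  ((Ext R (ModuleCat.{u} R) i).obj (op M)).obj N

/-- An `R`-module `C` is *semidualizing* if it admits a (possibly unbounded) resolution
by finite rank free `R`-modules, the homothety map `R → Hom_R(C, C)` is an isomorphism,
and `Ext^i_R(C, C) = 0` for all `i ≥ 1`. -/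
def IsSemidualizing (C : Type u) [AddCommGroup C] [Module R C] : Prop :=
  (∃ (P : ChainComplex (ModuleCat.{u} R) ℕ) (π : P.X 0 ⟶ ModuleCat.of R C)
      (w : P.d 1 0 ≫ π = 0),
      (∀ j, Module.Finite R (P.X j) ∧ Module.Free R (P.X j)) ∧
      (∀ j, (P.augment π w).ExactAt j)) ∧
  Function.Bijective (fun r : R => r • (LinearMap.id : C →ₗ[R] C)) ∧
  (∀ i : ℕ, 1 ≤ i → IsZero (extMod R i (ModuleCat.of R C) (ModuleCat.of R C)))

/-- A finitely generated `R`-module `H` is *totally `C`-reflexive* if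
`Ext^i_R(H, C) = 0 = Ext^i_R(Hom_R(H, C), C)` for all `i ≥ 1` and the natural
biduality map `H → Hom_R(Hom_R(H, C), C)` is an isomorphism. -/
def IsTotallyCReflexive (C : Type u) [AddCommGroup C] [Module R C]
    (H : Type u) [AddCommGroup H] [Module R H] : Prop :=
  Module.Finite R H ∧
  (∀ i : ℕ, 1 ≤ i → IsZero (extMod R i (ModuleCat.of R H) (ModuleCat.of R C))) ∧
  (∀ i : ℕ, 1 ≤ i →
    IsZero (extMod R i (ModuleCat.of R (H →ₗ[R] C)) (ModuleCat.of R C))) ∧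
  Function.Bijective ((LinearMap.id : (H →ₗ[R] C) →ₗ[R] (H →ₗ[R] C)).flip)

/-- `M` admits a finite resolution `0 → G_g → ⋯ → G₁ → G₀ → M → 0` of length at most
`g` by totally `C`-reflexive `R`-modules. -/
def HasTotallyCReflexiveRes (C : Type u) [AddCommGroup C] [Module R C]
    (M : ModuleCat.{u} R) (g : ℕ) : Prop :=
  ∃ (G : ChainComplex (ModuleCat.{u} R) ℕ) (π : G.X 0 ⟶ M) (w : G.d 1 0 ≫ π = 0),
    (∀ j, j ≤ g → IsTotallyCReflexive R C (G.X j)) ∧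
    (∀ j, g < j → IsZero (G.X j)) ∧
    (∀ j, (G.augment π w).ExactAt j)

/-- `M` is `G_C`-perfect of grade `g`: it admits a finite resolution of length `g` by
totally `C`-reflexive modules, and `Ext^n_R(M, C) = 0` for all `n ≠ g`. -/
def IsGCPerfect (C : Type u) [AddCommGroup C] [Module R C]
    (M : ModuleCat.{u} R) (g : ℕ) : Prop :=
  HasTotallyCReflexiveRes R C M g ∧
  ∀ n : ℕ, n ≠ g → IsZero (extMod R n M (ModuleCat.of R C))


namespace S19

lemma cmp_succ (n : ℕ) (X Y : ModuleCat.{u} R) :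
    Nonempty (extMod R (n+1) X Y ≃ₗ[R] Abelian.Ext.{u} X Y (n+1)) := by
  let P : ProjectiveResolution X := ProjectiveResolution.of X
  let S := (P.complex.linearYonedaObj R Y).sc' n (n+1) (n+2)
  have e1 : extMod R (n+1) X Y ≅ S.homology :=
    P.isoExt (n+1) Y ≪≫
      ShortComplex.homologyMapIso
        ((P.complex.linearYonedaObj R Y).isoSc' n (n+1) (n+2) (by simp) (by simp))
  have e2 := S.moduleCatHomologyIso
  have hsmul : ∀ (r : R) (f : P.complex.X (n+1) ⟶ Y) (hf : P.complex.d (n+2) (n+1) ≫ f = 0)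
      (hf' : P.complex.d (n+2) (n+1) ≫ (r • f) = 0),
      P.extMk (r • f) (n+2) rfl hf' = r • P.extMk f (n+2) rfl hf := by
    intro r f hf hf'
    rw [Abelian.Ext.smul_eq_comp_mk₀, P.extMk_comp_mk₀]
    simp
  let φ : LinearMap.ker S.g.hom →ₗ[R] Abelian.Ext.{u} X Y (n+1) :=
    { toFun := fun z => P.extMk (n := n+1) (Y := Y) (z.1 : P.complex.X (n+1) ⟶ Y) (n+2) rfl z.2
      map_add' := fun a b => (P.add_extMk (n := n+1) (Y := Y) _ _ (n+2) rfl a.2 b.2).symm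
      map_smul' := fun r a => hsmul r _ a.2 (r • a).2 }
  have hs : Function.Surjective φ := by
    intro α
    obtain ⟨f, hf, h⟩ := P.extMk_surjective α (n+2) rfl
    exact ⟨⟨f, hf⟩, h⟩
  have hk : LinearMap.ker φ = LinearMap.range S.moduleCatToCycles := by
    ext z
    rw [LinearMap.mem_ker]
    refine (P.extMk_eq_zero_iff (z.1 : P.complex.X (n+1) ⟶ Y) (n+2) rfl z.2 n rfl).trans ?_
    constructor
    · rintro ⟨g, hg⟩
      exact ⟨g, Subtype.ext hg⟩
    · rintro ⟨g, hg⟩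
      exact ⟨g, congrArg Subtype.val hg⟩
  exact ⟨(e1 ≪≫ e2).toLinearEquiv ≪≫ₗ Submodule.quotEquivOfEq _ _ hk.symm ≪≫ₗ
    φ.quotKerEquivOfSurjective hs⟩

lemma cmp_zero (X Y : ModuleCat.{u} R) :
    Nonempty (extMod R 0 X Y ≃ₗ[R] (X →ₗ[R] Y)) := by
  have h0 : PreservesLimits ((linearYoneda R (ModuleCat.{u} R)).obj Y) :=
    have : PreservesLimits ((linearYoneda R (ModuleCat.{u} R)).obj Y ⋙ forget _) :=
      (inferInstance : PreservesLimits (yoneda.obj Y))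
    preservesLimits_of_reflects_of_preserves _ (forget _)
  have h1 : PreservesFiniteColimits ((linearYoneda R (ModuleCat.{u} R)).obj Y).rightOp := by
    apply preservesFiniteColimits_rightOp
  have e1 : extMod R 0 X Y ≅ ((linearYoneda R (ModuleCat.{u} R)).obj Y).obj (op X) :=
    (((((linearYoneda R (ModuleCat.{u} R)).obj Y).rightOp).leftDerivedZeroIsoSelf).app X).unop.symm
  exact ⟨e1.toLinearEquiv ≪≫ₗ ModuleCat.homLinearEquiv⟩

lemma isZero_iff (X : ModuleCat.{u} R) : IsZero X ↔ Subsingleton X :=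
  ModuleCat.isZero_iff_subsingleton

variable (C : Type u) [AddCommGroup C] [Module R C]

/-- Ext into `C`. -/
noncomputable abbrev e (n : ℕ) (M : Type u) [AddCommGroup M] [Module R M] : ModuleCat.{u} R :=
  extMod R n (ModuleCat.of R M) (ModuleCat.of R C)

variable {R}
variable {A B D : Type u} [AddCommGroup A] [Module R A] [AddCommGroup B] [Module R B]
  [AddCommGroup D] [Module R D]

lemma e_zero (M : Type u) [AddCommGroup M] [Module R M] :
    Nonempty (e R C 0 M ≃ₗ[R] (M →ₗ[R] C)) := cmp_zero R _ _

lemma e_congr (n : ℕ) (f : A ≃ₗ[R] B) : Nonempty (e R C n A ≃ₗ[R] e R C n B) :=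
  ⟨(((Ext R (ModuleCat.{u} R) n).mapIso f.toModuleIso.symm.op).app
    (ModuleCat.of R C)).toLinearEquiv⟩

lemma e_subsingleton (n : ℕ) (M : Type u) [AddCommGroup M] [Module R M] [Subsingleton M] :
    Subsingleton (e R C (n+1) M) := by
  have : Projective (ModuleCat.of R M) :=
    ((isZero_iff R (ModuleCat.of R M)).2 ‹_›).projective
  exact (isZero_iff R _).1 (isZero_Ext_succ_of_projective _ _ n)

/-- the short complex -/
abbrev sc (f : A →ₗ[R] B) (p : B →ₗ[R] D) (h : Function.Exact f p) :
    ShortComplex (ModuleCat.{u} R) :=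
  ShortComplex.mk (ModuleCat.ofHom f) (ModuleCat.ofHom p) (by
    ext x; exact h.apply_apply_eq_zero x)

lemma sc_exact (f : A →ₗ[R] B) (p : B →ₗ[R] D) (h : Function.Exact f p)
    (hf : Function.Injective f) (hp : Function.Surjective p) : (sc f p h).ShortExact :=
  { exact := (ShortComplex.moduleCat_exact_iff _).2 fun x hx => (h x).1 hx
    mono_f := (ModuleCat.mono_iff_injective _).2 hf
    epi_g := (ModuleCat.epi_iff_surjective _).2 hp }

/-- connecting map -/
noncomputable def δ {S : ShortComplex (ModuleCat.{u} R)} (hS : S.ShortExact) (Y : ModuleCat.{u} R)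
    (n m : ℕ) (h : 1 + n = m) :
    Abelian.Ext.{u} S.X₁ Y n →ₗ[R] Abelian.Ext.{u} S.X₃ Y m where
  toFun x := hS.extClass.comp x h
  map_add' x y := by simp
  map_smul' r x := by simp

lemma δ_surj {S : ShortComplex (ModuleCat.{u} R)} (hS : S.ShortExact) (Y : ModuleCat.{u} R)
    (n m : ℕ) (h : 1 + n = m) (h2 : Subsingleton (Abelian.Ext.{u} S.X₂ Y m)) :
    Function.Surjective (δ hS Y n m h) := by
  intro x
  exact Abelian.Ext.contravariant_sequence_exact₃ hS Y x (Subsingleton.elim _ _) h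

lemma e_shift (f : A →ₗ[R] B) (p : B →ₗ[R] D) (h : Function.Exact f p)
    (hf : Function.Injective f) (hp : Function.Surjective p)
    (hB : ∀ i, 1 ≤ i → Subsingleton (e R C i B)) (n : ℕ) :
    Nonempty (e R C (n+2) D ≃ₗ[R] e R C (n+1) A) := by
  have hS := sc_exact f p h hf hp
  obtain ⟨a⟩ := cmp_succ R n (ModuleCat.of R A) (ModuleCat.of R C)
  obtain ⟨b⟩ := cmp_succ R n (ModuleCat.of R B) (ModuleCat.of R C)
  obtain ⟨b'⟩ := cmp_succ R (n+1) (ModuleCat.of R B) (ModuleCat.of R C)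
  obtain ⟨d⟩ := cmp_succ R (n+1) (ModuleCat.of R D) (ModuleCat.of R C)
  have hb := hB (n+1) (by omega)
  have hb' := hB (n+2) (by omega)
  have hb := b.symm.injective.subsingleton
  have hb' := b'.symm.injective.subsingleton
  refine ⟨d ≪≫ₗ (LinearEquiv.ofBijective (δ hS (ModuleCat.of R C) (n+1) (n+2) (by omega))
    ⟨?_, δ_surj _ _ _ _ _ hb'⟩).symm ≪≫ₗ a.symm⟩
  rw [← LinearMap.ker_eq_bot, LinearMap.ker_eq_bot']
  intro x hx
  obtain ⟨y, hy⟩ := Abelian.Ext.contravariant_sequence_exact₁ hS (ModuleCat.of R C) x (by omega) hx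
  obtain rfl : y = 0 := hb.elim _ _
  simpa using hy.symm

lemma e_one (f : A →ₗ[R] B) (p : B →ₗ[R] D) (h : Function.Exact f p)
    (hf : Function.Injective f) (hp : Function.Surjective p)
    (hB : ∀ i, 1 ≤ i → Subsingleton (e R C i B)) :
    Nonempty (e R C 1 D ≃ₗ[R] ((A →ₗ[R] C) ⧸ LinearMap.range (LinearMap.lcomp R C f))) := by
  have hS := sc_exact f p h hf hp
  obtain ⟨b'⟩ := cmp_succ R 0 (ModuleCat.of R B) (ModuleCat.of R C)
  obtain ⟨d⟩ := cmp_succ R 0 (ModuleCat.of R D) (ModuleCat.of R C)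
  have hb' := hB 1 (by omega)
  have hb' := b'.symm.injective.subsingleton
  let l : (A →ₗ[R] C) ≃ₗ[R] Abelian.Ext.{u} (ModuleCat.of R A) (ModuleCat.of R C) 0 :=
    (ModuleCat.homLinearEquiv (S := R) (M := ModuleCat.of R A) (N := ModuleCat.of R C)).symm ≪≫ₗ (Abelian.Ext.linearEquiv₀ (R := R)).symm
  let φ := (δ hS (ModuleCat.of R C) 0 1 (by omega)) ∘ₗ l.toLinearMap
  have hs : Function.Surjective φ := (δ_surj hS _ 0 1 (by omega) hb').comp l.surjective
  refine ⟨d ≪≫ₗ (φ.quotKerEquivOfSurjective hs).symm ≪≫ₗ Submodule.quotEquivOfEq _ _ ?_⟩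
  ext x
  constructor
  · intro hx
    obtain ⟨y, hy⟩ := Abelian.Ext.contravariant_sequence_exact₁ hS (ModuleCat.of R C) (l x) (by omega) hx
    obtain ⟨y, rfl⟩ := (Abelian.Ext.linearEquiv₀ (R := R)).symm.surjective y
    refine ⟨y.hom, l.injective ?_⟩
    rw [← hy]
    change Abelian.Ext.mk₀ _ = _
    rw [Abelian.Ext.linearEquiv₀_symm_apply, Abelian.Ext.mk₀_comp_mk₀]
    rfl
  · rintro ⟨y, rfl⟩
    have : l (LinearMap.lcomp R C f y) =
      (Abelian.Ext.mk₀ (sc f p h).f).comp (Abelian.Ext.mk₀ (ModuleCat.ofHom y)) (zero_add 0) := by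
      rw [Abelian.Ext.mk₀_comp_mk₀]
      rfl
    change hS.extClass.comp (l (LinearMap.lcomp R C f y)) (by omega) = 0
    rw [this]
    exact hS.extClass_comp_assoc _

/-- evaluation -/
abbrev ev (R : Type u) [CommRing R] (C : Type u) [AddCommGroup C] [Module R C] (M : Type u) [AddCommGroup M] [Module R M] : M →ₗ[R] (M →ₗ[R] C) →ₗ[R] C :=
  (LinearMap.id : (M →ₗ[R] C) →ₗ[R] (M →ₗ[R] C)).flip

variable {C}

lemma TR.ext {G : Type u} [AddCommGroup G] [Module R G] (h : IsTotallyCReflexive R C G) :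
    ∀ i, 1 ≤ i → Subsingleton (e R C i G) := fun i hi => (isZero_iff R _).1 (h.2.1 i hi)

lemma TR.ext' {G : Type u} [AddCommGroup G] [Module R G] (h : IsTotallyCReflexive R C G) :
    ∀ i, 1 ≤ i → Subsingleton (e R C i (G →ₗ[R] C)) := fun i hi => (isZero_iff R _).1 (h.2.2.1 i hi)

lemma TR.congr {G H : Type u} [AddCommGroup G] [Module R G] [AddCommGroup H] [Module R H]
    (h : IsTotallyCReflexive R C G) (f : G ≃ₗ[R] H) : IsTotallyCReflexive R C H := by
  have := h.1
  let d : (G →ₗ[R] C) ≃ₗ[R] (H →ₗ[R] C) := f.arrowCongr (LinearEquiv.refl R C)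
  let D : ((G →ₗ[R] C) →ₗ[R] C) ≃ₗ[R] ((H →ₗ[R] C) →ₗ[R] C) :=
    d.arrowCongr (LinearEquiv.refl R C)
  refine ⟨Module.Finite.equiv f, ?_, ?_, ?_⟩
  · intro i hi
    obtain ⟨a⟩ := e_congr C i f
    have := TR.ext h i hi
    exact (isZero_iff R _).2 a.symm.injective.subsingleton
  · intro i hi
    obtain ⟨a⟩ := e_congr C i d
    have := TR.ext' h i hi
    exact (isZero_iff R _).2 a.symm.injective.subsingleton
  · have key : ev R C H = D.toLinearMap ∘ₗ ev R C G ∘ₗ f.symm.toLinearMap := by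
      ext x χ
      simp [D, d, LinearEquiv.arrowCongr_apply]
    change Function.Bijective (ev R C H)
    rw [key]
    exact D.bijective.comp (h.2.2.2.comp f.symm.bijective)

lemma TR.dual [IsNoetherianRing R] [Module.Finite R C] {G : Type u} [AddCommGroup G] [Module R G]
    (h : IsTotallyCReflexive R C G) : IsTotallyCReflexive R C (G →ₗ[R] C) := by
  have := h.1
  let E := LinearEquiv.ofBijective (ev R C G) h.2.2.2
  refine ⟨inferInstance, h.2.2.1, ?_, ?_⟩
  · intro i hi
    obtain ⟨a⟩ := e_congr C i E
    have := TR.ext h i hi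
    exact (isZero_iff R _).2 a.symm.injective.subsingleton
  · let d : (((G →ₗ[R] C) →ₗ[R] C) →ₗ[R] C) ≃ₗ[R] (G →ₗ[R] C) :=
      E.symm.arrowCongr (LinearEquiv.refl R C)
    have key : ev R C (G →ₗ[R] C) = d.symm.toLinearMap := by
      ext χ ψ
      obtain ⟨x, rfl⟩ := E.surjective ψ
      simp [d, E]
    change Function.Bijective (ev R C (G →ₗ[R] C))
    rw [key]
    exact d.symm.bijective

variable (C) in
/-- `Res C n M`: resolution of length `n - 1`. -/
def Res : ℕ → ∀ (M : Type u) [AddCommGroup M] [Module R M], Prop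
  | 0, M, _, _ => Subsingleton M
  | n+1, M, _, _ => ∃ (K G : Type u) (_ : AddCommGroup K) (_ : Module R K)
      (_ : AddCommGroup G) (_ : Module R G) (f : K →ₗ[R] G) (p : G →ₗ[R] M),
      Function.Injective f ∧ Function.Exact f p ∧ Function.Surjective p ∧
      IsTotallyCReflexive R C G ∧ Res n K

lemma Res.congr : ∀ {n : ℕ} {M N : Type u} [AddCommGroup M] [Module R M] [AddCommGroup N]
    [Module R N] (_ : Res (R := R) C n M) (_ : M ≃ₗ[R] N), Res (R := R) C n N
  | 0, M, N, _, _, _, _, h, a => by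
    have : Subsingleton M := h
    exact a.symm.injective.subsingleton
  | n+1, M, N, _, _, _, _, h, a => by
    obtain ⟨K, G, _, _, _, _, f, p, hf, hfp, hp, hG, hK⟩ := h
    refine ⟨K, G, _, _, _, _, f, a.toLinearMap ∘ₗ p, hf, ?_, a.surjective.comp hp, hG, hK⟩
    intro x
    simp [hfp x]

lemma Res.one {M : Type u} [AddCommGroup M] [Module R M] (h : Res (R := R) C 1 M) :
    IsTotallyCReflexive R C M := by
  obtain ⟨K, G, _, _, _, _, f, p, hf, hfp, hp, hG, hK⟩ := h
  have : Subsingleton K := hK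
  refine TR.congr hG (LinearEquiv.ofBijective p ⟨?_, hp⟩)
  rw [← LinearMap.ker_eq_bot, LinearMap.ker_eq_bot']
  intro x hx
  obtain ⟨y, rfl⟩ := (hfp x).1 hx
  rw [Subsingleton.elim y 0, map_zero]

lemma Res.of {M : Type u} [AddCommGroup M] [Module R M] (h : IsTotallyCReflexive R C M) :
    Res (R := R) C 1 M :=
  ⟨PUnit, M, inferInstance, inferInstance, inferInstance, inferInstance, 0, LinearMap.id,
    Function.injective_of_subsingleton _, fun x => by simp [eq_comm],
    Function.surjective_id, h, show Subsingleton PUnit from inferInstance⟩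

lemma Res.finite {n : ℕ} {M : Type u} [AddCommGroup M] [Module R M]
    (h : Res (R := R) C (n+1) M) : Module.Finite R M := by
  obtain ⟨K, G, _, _, _, _, f, p, hf, hfp, hp, hG, hK⟩ := h
  have := hG.1
  exact Module.Finite.of_surjective p hp

section dualSES

variable (f : A →ₗ[R] B) (p : B →ₗ[R] D)

lemma dual_inj (hp : Function.Surjective p) : Function.Injective (LinearMap.lcomp R C p) :=
  fun _ _ hab => LinearMap.ext fun x => by
    obtain ⟨y, rfl⟩ := hp x
    exact LinearMap.congr_fun hab y

lemma dual_exact (h : Function.Exact f p) (hp : Function.Surjective p) :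
    Function.Exact (LinearMap.lcomp R C p) (LinearMap.lcomp R C f) := by
  intro χ
  constructor
  · intro hχ
    have hk : LinearMap.ker p ≤ LinearMap.ker χ := by
      intro x hx
      obtain ⟨y, rfl⟩ := (h x).1 hx
      exact LinearMap.congr_fun hχ y
    refine ⟨(LinearMap.ker p).liftQ χ hk ∘ₗ (p.quotKerEquivOfSurjective hp).symm.toLinearMap, ?_⟩
    ext x
    have : (p.quotKerEquivOfSurjective hp).symm (p x) = Submodule.Quotient.mk x := by
      rw [LinearEquiv.symm_apply_eq]; rfl
    simp [this]
  · rintro ⟨y, rfl⟩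
    ext x
    simp [h.apply_apply_eq_zero x]

end dualSES

section keylem

variable {K G M I : Type u} [AddCommGroup K] [Module R K] [AddCommGroup G] [Module R G]
  [AddCommGroup M] [Module R M] [AddCommGroup I] [Module R I]
  (f : K →ₗ[R] G) (p : G →ₗ[R] M)

lemma e_one_I (hp : Function.Surjective p) (hG : IsTotallyCReflexive R C G)
    (r : (G →ₗ[R] C) →ₗ[R] I) (hr : Function.Surjective r)
    (hpr : Function.Exact (LinearMap.lcomp R C p) r) : Nonempty (e R C 1 I ≃ₗ[R]
    (((M →ₗ[R] C) →ₗ[R] C) ⧸ LinearMap.range (ev R C M))) := by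
  obtain ⟨a⟩ := e_one C _ r hpr (dual_inj p hp) hr (TR.ext' hG)
  refine ⟨a ≪≫ₗ Submodule.quotEquivOfEq _ _ ?_⟩
  ext χ
  constructor
  · rintro ⟨ψ, rfl⟩
    obtain ⟨x, rfl⟩ := hG.2.2.2.2 ψ
    exact ⟨p x, rfl⟩
  · rintro ⟨m, rfl⟩
    obtain ⟨x, rfl⟩ := hp m
    exact ⟨ev R C G x, rfl⟩

lemma ker_ev_equiv (h : Function.Exact f p) (hG : IsTotallyCReflexive R C G)
    (r : (G →ₗ[R] C) →ₗ[R] I) (hr : Function.Surjective r)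
    (hpr : Function.Exact (LinearMap.lcomp R C p) r) (N : Submodule R (I →ₗ[R] C))
    (hN : ∀ l : I →ₗ[R] C, l ∈ N ↔ ∃ k : K, ∀ χ : G →ₗ[R] C, l (r χ) = χ (f k))
    (hp : Function.Surjective p) :
    Nonempty (((I →ₗ[R] C) ⧸ N) ≃ₗ[R] LinearMap.ker (ev R C M)) := by
  let E := LinearEquiv.ofBijective (ev R C G) hG.2.2.2
  let θ : (I →ₗ[R] C) →ₗ[R] M := p ∘ₗ E.symm.toLinearMap ∘ₗ LinearMap.lcomp R C r
  have hE : ∀ (l : I →ₗ[R] C) (χ : G →ₗ[R] C), χ (E.symm (l ∘ₗ r)) = l (r χ) := by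
    intro l χ
    exact LinearMap.congr_fun (E.apply_symm_apply (l ∘ₗ r)) χ
  have hk : LinearMap.ker θ = N := by
    ext l
    rw [hN, LinearMap.mem_ker]
    refine (h (E.symm (l ∘ₗ r))).trans ?_
    constructor
    · rintro ⟨k, hk⟩
      refine ⟨k, fun χ => ?_⟩
      rw [hk, hE]
    · rintro ⟨k, hk⟩
      refine ⟨k, ?_⟩
      rw [LinearEquiv.eq_symm_apply]
      ext χ
      exact (hk χ).symm
  have hr' : LinearMap.range θ = LinearMap.ker (ev R C M) := by
    ext m
    constructor
    · rintro ⟨l, rfl⟩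
      rw [LinearMap.mem_ker]
      ext χ
      change χ (p (E.symm (l ∘ₗ r))) = 0
      refine (hE l (χ ∘ₗ p)).trans ?_
      have : r (χ ∘ₗ p) = 0 := hpr.apply_apply_eq_zero χ
      rw [this, map_zero]
    · intro hm
      obtain ⟨x, rfl⟩ := hp m
      have hk : LinearMap.ker r ≤ LinearMap.ker (ev R C G x) := by
        intro χ hχ
        obtain ⟨y, rfl⟩ := (hpr χ).1 hχ
        exact LinearMap.congr_fun hm y
      refine ⟨(LinearMap.ker r).liftQ _ hk ∘ₗ (r.quotKerEquivOfSurjective hr).symm.toLinearMap, ?_⟩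
      change p (E.symm _) = p x
      congr 1
      rw [LinearEquiv.symm_apply_eq]
      ext χ
      have : (r.quotKerEquivOfSurjective hr).symm (r χ) = Submodule.Quotient.mk χ := by
        rw [LinearEquiv.symm_apply_eq]; rfl
      simp [this, E]
  exact ⟨Submodule.quotEquivOfEq _ _ hk.symm ≪≫ₗ θ.quotKerEquivRange ≪≫ₗ
    LinearEquiv.ofEq _ _ hr'⟩

end keylem

lemma eq_zero_of_ev {G : Type u} [AddCommGroup G] [Module R G] (hG : IsTotallyCReflexive R C G)
    (x : G) (h : ∀ χ : G →ₗ[R] C, χ x = 0) : x = 0 := by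
  apply hG.2.2.2.1
  ext χ
  simpa using h χ

section claims

variable [IsNoetherianRing R] [Module.Finite R C]

/-- `e 1 M = 0` gives surjectivity of the dual map. -/
lemma dual_surj {K G M : Type u} [AddCommGroup K] [Module R K] [AddCommGroup G] [Module R G]
    [AddCommGroup M] [Module R M] (f : K →ₗ[R] G) (p : G →ₗ[R] M) (hf : Function.Injective f)
    (h : Function.Exact f p) (hp : Function.Surjective p) (hG : IsTotallyCReflexive R C G)
    (h1 : Subsingleton (e R C 1 M)) : Function.Surjective (LinearMap.lcomp R C f) := by
  obtain ⟨a⟩ := e_one C f p h hf hp (TR.ext hG)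
  have := a.symm.injective.subsingleton
  intro y
  exact (Submodule.Quotient.mk_eq_zero (LinearMap.range (LinearMap.lcomp R C f))).1 (Subsingleton.elim _ _)

lemma claimA : ∀ (m : ℕ) (M : Type u) [AddCommGroup M] [Module R M]
    (_ : Res (R := R) C (m+2) M) (_ : ∀ i, 1 ≤ i → i < m+1 → Subsingleton (e R C i M))
    (k : ℕ) (_ : Res (R := R) C k (M →ₗ[R] C)),
    Res (R := R) C (k+m+2) (e R C (m+1) M)
  | 0, M, _, _, hM, hi, k, hk => by
    obtain ⟨K, G, _, _, _, _, f, p, hf, h, hp, hG, hK⟩ := hM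
    have hK := Res.one hK
    let I := LinearMap.range (LinearMap.lcomp R C f)
    obtain ⟨a⟩ := e_one C f p h hf hp (TR.ext hG)
    refine Res.congr (n := k+2) ?_ a.symm
    refine ⟨I, K →ₗ[R] C, _, _, _, _, I.subtype, I.mkQ, I.injective_subtype,
      LinearMap.exact_subtype_mkQ I, I.mkQ_surjective, TR.dual hK, ?_⟩
    refine ⟨M →ₗ[R] C, G →ₗ[R] C, _, _, _, _, LinearMap.lcomp R C p,
      (LinearMap.lcomp R C f).rangeRestrict, dual_inj p hp, ?_,
      LinearMap.surjective_rangeRestrict _, TR.dual hG, hk⟩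
    intro x
    rw [← dual_exact f p h hp x]
    exact Subtype.ext_iff
  | m+1, M, _, _, hM, hi, k, hk => by
    obtain ⟨K, G, _, _, _, _, f, p, hf, h, hp, hG, hK⟩ := hM
    have hs := dual_surj f p hf h hp hG (hi 1 le_rfl (by omega))
    obtain ⟨a⟩ := e_shift C f p h hf hp (TR.ext hG) m
    refine Res.congr ?_ a.symm
    have := claimA m K hK (fun i h1 h2 => ?_) (k+1)
      ⟨M →ₗ[R] C, G →ₗ[R] C, _, _, _, _, LinearMap.lcomp R C p, LinearMap.lcomp R C f,
        dual_inj p hp, dual_exact f p h hp, hs, TR.dual hG, hk⟩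
    · rwa [show k + (m+1) + 2 = k+1+m+2 by omega]
    · obtain ⟨j, rfl⟩ : ∃ j, i = j+1 := ⟨i-1, by omega⟩
      obtain ⟨b⟩ := e_shift C f p h hf hp (TR.ext hG) j
      have := hi (j+2) (by omega) (by omega)
      exact b.symm.injective.subsingleton

lemma claimB : ∀ (m : ℕ) (M : Type u) [AddCommGroup M] [Module R M]
    (_ : Res (R := R) C (m+2) M) (_ : ∀ i, 1 ≤ i → i < m+1 → Subsingleton (e R C i M))
    (X : Type u) [AddCommGroup X] [Module R X] (_ : X ≃ₗ[R] e R C (m+1) M),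
    (∀ i, i < m+1 → Subsingleton (e R C i X)) ∧
    Nonempty (e R C (m+1) X ≃ₗ[R] LinearMap.ker (ev R C M)) ∧
    Nonempty (e R C (m+2) X ≃ₗ[R] (((M →ₗ[R] C) →ₗ[R] C) ⧸ LinearMap.range (ev R C M))) ∧
    ∀ n, Nonempty (e R C (m+n+3) X ≃ₗ[R] e R C (n+1) (M →ₗ[R] C))
  | 0, M, _, _, hM, hi, X, _, _, x => by
    obtain ⟨K, G, _, _, _, _, f, p, hf, h, hp, hG, hK⟩ := hM
    have hK := Res.one hK
    let I := LinearMap.range (LinearMap.lcomp R C f)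
    obtain ⟨a⟩ := e_one C f p h hf hp (TR.ext hG)
    let q : (K →ₗ[R] C) →ₗ[R] X := (x ≪≫ₗ a).symm.toLinearMap ∘ₗ I.mkQ
    have hq : Function.Surjective q := (x ≪≫ₗ a).symm.surjective.comp I.mkQ_surjective
    have hIq : Function.Exact I.subtype q := by
      intro y
      rw [← LinearMap.exact_subtype_mkQ I y]
      exact LinearEquiv.map_eq_zero_iff (x ≪≫ₗ a).symm
    have hI := I.injective_subtype
    let r : (G →ₗ[R] C) →ₗ[R] I := (LinearMap.lcomp R C f).rangeRestrict
    have hr : Function.Surjective r := LinearMap.surjective_rangeRestrict _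
    have hpr : Function.Exact (LinearMap.lcomp R C p) r := by
      intro x
      rw [← dual_exact f p h hp x]
      exact Subtype.ext_iff
    refine ⟨?_, ?_, ?_, ?_⟩
    · intro i hi
      obtain rfl : i = 0 := by omega
      obtain ⟨z⟩ := e_zero (R := R) C X
      suffices Subsingleton (X →ₗ[R] C) from z.injective.subsingleton
      refine subsingleton_of_forall_eq 0 fun φ => ?_
      obtain ⟨k, hk⟩ := hK.2.2.2.2 (φ ∘ₗ q)
      have hk0 : k = 0 := by
        apply hf
        rw [map_zero]
        refine eq_zero_of_ev hG _ fun χ => ?_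
        have h1 := LinearMap.congr_fun hk (χ ∘ₗ f)
        have h2 : q (χ ∘ₗ f) = 0 := (hIq _).2 ⟨⟨_, χ, rfl⟩, rfl⟩
        simpa [h2] using h1
      ext y
      obtain ⟨y, rfl⟩ := hq y
      have := LinearMap.congr_fun hk y
      rw [hk0] at this
      simpa using this.symm
    · obtain ⟨b⟩ := e_one C I.subtype q hIq hI hq (TR.ext' hK)
      have hN : ∀ l : I →ₗ[R] C, l ∈ LinearMap.range (LinearMap.lcomp R C I.subtype) ↔
          ∃ k : K, ∀ χ : G →ₗ[R] C, l (r χ) = χ (f k) := by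
        intro l
        constructor
        · rintro ⟨ψ, rfl⟩
          obtain ⟨k, rfl⟩ := hK.2.2.2.2 ψ
          exact ⟨k, fun χ => rfl⟩
        · rintro ⟨k, hk⟩
          refine ⟨ev R C K k, ?_⟩
          ext y
          obtain ⟨χ, rfl⟩ := hr y
          exact (hk χ).symm
      obtain ⟨c⟩ := ker_ev_equiv f p h hG r hr hpr _ hN hp
      exact ⟨b ≪≫ₗ c⟩
    · obtain ⟨b⟩ := e_shift C I.subtype q hIq hI hq (TR.ext' hK) 0
      obtain ⟨c⟩ := e_one_I p hp hG r hr hpr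
      exact ⟨b ≪≫ₗ c⟩
    · intro n
      obtain ⟨b⟩ := e_shift C I.subtype q hIq hI hq (TR.ext' hK) (n+1)
      obtain ⟨c⟩ := e_shift C _ r hpr (dual_inj p hp) hr (TR.ext' hG) n
      rw [show 0 + n + 3 = n + 1 + 2 by omega]
      exact ⟨b ≪≫ₗ c⟩
  | m+1, M, _, _, hM, hi, X, _, _, x => by
    obtain ⟨K, G, _, _, _, _, f, p, hf, h, hp, hG, hK⟩ := hM
    have hs := dual_surj f p hf h hp hG (hi 1 le_rfl (by omega))
    have hpr := dual_exact (C := C) f p h hp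
    obtain ⟨a⟩ := e_shift C f p h hf hp (TR.ext hG) m
    obtain ⟨h1, ⟨h2⟩, ⟨h3⟩, h4⟩ := claimB m K hK (fun i h1 h2 => by
      obtain ⟨j, rfl⟩ : ∃ j, i = j+1 := ⟨i-1, by omega⟩
      obtain ⟨b⟩ := e_shift C f p h hf hp (TR.ext hG) j
      have := hi (j+2) (by omega) (by omega)
      exact b.symm.injective.subsingleton) X (x ≪≫ₗ a)
    refine ⟨?_, ?_, ?_, ?_⟩
    · intro i hi
      by_cases him : i < m+1
      · exact h1 i him
      · obtain rfl : i = m+1 := by omega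
        suffices Subsingleton (LinearMap.ker (ev R C K)) from h2.injective.subsingleton
        rw [Submodule.subsingleton_iff_eq_bot, LinearMap.ker_eq_bot']
        intro k hk
        apply hf
        rw [map_zero]
        refine eq_zero_of_ev hG _ fun χ => ?_
        exact LinearMap.congr_fun hk (χ ∘ₗ f)
    · have hN : ∀ l : (K →ₗ[R] C) →ₗ[R] C, l ∈ LinearMap.range (ev R C K) ↔
          ∃ k : K, ∀ χ : G →ₗ[R] C, l (LinearMap.lcomp R C f χ) = χ (f k) := by
        intro l
        constructor
        · rintro ⟨k, rfl⟩
          exact ⟨k, fun χ => rfl⟩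
        · rintro ⟨k, hk⟩
          refine ⟨k, ?_⟩
          ext y
          obtain ⟨χ, rfl⟩ := hs y
          exact (hk χ).symm
      obtain ⟨c⟩ := ker_ev_equiv f p h hG _ hs hpr _ hN hp
      exact ⟨h3 ≪≫ₗ c⟩
    · obtain ⟨b⟩ := h4 0
      obtain ⟨c⟩ := e_one_I p hp hG _ hs hpr
      exact ⟨b ≪≫ₗ c⟩
    · intro n
      obtain ⟨b⟩ := h4 (n+1)
      obtain ⟨c⟩ := e_shift C _ _ hpr (dual_inj p hp) hs (TR.ext' hG) n
      rw [show m + 1 + n + 3 = m + (n + 1) + 3 by omega]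
      exact ⟨b ≪≫ₗ c⟩

end claims

section complexes

/-- Unbundled resolutions. -/
lemma Res.toSeq : ∀ {n : ℕ} {M : Type u} [AddCommGroup M] [Module R M]
    (_ : Res (R := R) C (n+1) M),
    ∃ (X : ℕ → ModuleCat.{u} R) (d : ∀ i, X (i+1) →ₗ[R] X i) (π : X 0 →ₗ[R] M),
      (∀ j, j ≤ n → IsTotallyCReflexive R C (X j)) ∧ (∀ j, n < j → Subsingleton (X j)) ∧
      Function.Surjective π ∧ Function.Exact (d 0) π ∧ ∀ i, Function.Exact (d (i+1)) (d i)
  | 0, M, _, _, h => by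
    refine ⟨fun i => match i with | 0 => ModuleCat.of R M | _+1 => ModuleCat.of R PUnit,
      fun i => 0, LinearMap.id, ?_, ?_, Function.surjective_id, ?_, ?_⟩
    · intro j hj
      obtain rfl : j = 0 := by omega
      exact Res.one h
    · intro j hj
      obtain ⟨j, rfl⟩ : ∃ i, j = i+1 := ⟨j-1, by omega⟩
      exact inferInstanceAs (Subsingleton PUnit)
    · intro x
      simp [eq_comm]
    · intro i x
      exact ⟨fun _ => ⟨0, Subsingleton.elim (α := PUnit) _ _⟩, fun _ => rfl⟩
  | n+1, M, _, _, h => by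
    obtain ⟨K, G, _, _, _, _, f, p, hf, hfp, hp, hG, hK⟩ := h
    obtain ⟨X, d, π, h1, h2, h3, h4, h5⟩ := Res.toSeq hK
    refine ⟨fun i => match i with | 0 => ModuleCat.of R G | i+1 => X i,
      fun i => match i with | 0 => f ∘ₗ π | i+1 => d i, p, ?_, ?_, hp, ?_, ?_⟩
    · intro j hj
      match j with
      | 0 => exact hG
      | j+1 => exact h1 j (by omega)
    · intro j hj
      match j with
      | 0 => omega
      | j+1 => exact h2 j (by omega)
    · intro x
      refine (hfp x).trans ?_
      constructor
      · rintro ⟨y, rfl⟩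
        obtain ⟨z, rfl⟩ := h3 y
        exact ⟨z, rfl⟩
      · rintro ⟨z, rfl⟩
        exact ⟨π z, rfl⟩
    · intro i
      match i with
      | 0 =>
        intro x
        refine Iff.trans ?_ (h4 x)
        exact ⟨fun hx => hf (by simpa using hx), fun hx => by
          change f (π x) = 0
          rw [hx, map_zero]⟩
      | i+1 => exact h5 i

lemma Res.ofSeq : ∀ {n : ℕ} {M : Type u} [AddCommGroup M] [Module R M]
    (X : ℕ → ModuleCat.{u} R) (d : ∀ i, X (i+1) →ₗ[R] X i) (π : X 0 →ₗ[R] M)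
    (_ : ∀ j, j ≤ n → IsTotallyCReflexive R C (X j)) (_ : ∀ j, n < j → Subsingleton (X j))
    (_ : Function.Surjective π) (_ : Function.Exact (d 0) π)
    (_ : ∀ i, Function.Exact (d (i+1)) (d i)),
    Res (R := R) C (n+1) M
  | n, M, _, _, X, d, π, h1, h2, h3, h4, h5 => by
    refine ⟨LinearMap.ker π, X 0, _, _, _, _, (LinearMap.ker π).subtype, π,
      Submodule.injective_subtype _, LinearMap.exact_subtype_ker_map π, h3, h1 0 (by omega), ?_⟩
    let π' : X 1 →ₗ[R] LinearMap.ker π :=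
      (d 0).codRestrict _ fun x => h4.apply_apply_eq_zero x
    have hπ' : Function.Surjective π' := by
      rintro ⟨x, hx⟩
      obtain ⟨y, hy⟩ := (h4 x).1 hx
      exact ⟨y, Subtype.ext hy⟩
    match n with
    | 0 =>
      have := h2 1 (by omega)
      exact hπ'.subsingleton
    | n+1 =>
      refine Res.ofSeq (fun i => X (i+1)) (fun i => d (i+1)) π' (fun j hj => h1 _ (by omega))
        (fun j hj => h2 _ (by omega)) hπ' ?_ (fun i => h5 _)
      intro x
      refine Iff.trans ?_ (h5 0 x)
      exact Subtype.ext_iff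

lemma augment_exact (G : ChainComplex (ModuleCat.{u} R) ℕ) {M : ModuleCat.{u} R} (π : G.X 0 ⟶ M)
    (w : G.d 1 0 ≫ π = 0) : (∀ j, (G.augment π w).ExactAt j) ↔
      (Function.Surjective π.hom ∧ Function.Exact (G.d 1 0).hom π.hom ∧
        ∀ i, Function.Exact (G.d (i+2) (i+1)).hom (G.d (i+1) i).hom) := by
  have key : ∀ i j k, (ComplexShape.down ℕ).prev j = i → (ComplexShape.down ℕ).next j = k →
      ((G.augment π w).ExactAt j ↔
        Function.Exact ((G.augment π w).d i j).hom ((G.augment π w).d j k).hom) := by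
    intro i j k hi hk
    rw [HomologicalComplex.exactAt_iff' _ i j k hi hk,
      ShortComplex.moduleCat_exact_iff_range_eq_ker, LinearMap.exact_iff]
    exact eq_comm
  have h0 : (G.augment π w).ExactAt 0 ↔ Function.Surjective π.hom := by
    rw [key 1 0 0 (by simp) (by simp)]
    constructor
    · intro h y
      have : ((G.augment π w).d 0 0).hom y = 0 := by
        rw [(G.augment π w).shape 0 0 (by simp)]; rfl
      exact (h y).1 this
    · intro h y
      rw [(G.augment π w).shape 0 0 (by simp)]
      exact ⟨fun _ => h y, fun _ => rfl⟩
  have h1 : (G.augment π w).ExactAt 1 ↔ Function.Exact (G.d 1 0).hom π.hom :=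
    key 2 1 0 (by simp) (by simp)
  have h2 : ∀ i, (G.augment π w).ExactAt (i+2) ↔
      Function.Exact (G.d (i+2) (i+1)).hom (G.d (i+1) i).hom := fun i =>
    key (i+3) (i+2) (i+1) (by simp) (by simp)
  constructor
  · exact fun h => ⟨h0.1 (h 0), h1.1 (h 1), fun i => (h2 i).1 (h _)⟩
  · rintro ⟨a, b, c⟩ j
    match j with
    | 0 => exact h0.2 a
    | 1 => exact h1.2 b
    | j+2 => exact (h2 j).2 (c j)

lemma res_iff (M : ModuleCat.{u} R) (g : ℕ) :
    HasTotallyCReflexiveRes R C M g ↔ Res (R := R) C (g+1) M := by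
  constructor
  · rintro ⟨G, π, w, h1, h2, h3⟩
    rw [augment_exact] at h3
    exact Res.ofSeq G.X (fun i => (G.d (i+1) i).hom) π.hom h1
      (fun j hj => (isZero_iff R _).1 (h2 j hj)) h3.1 h3.2.1 h3.2.2
  · intro h
    obtain ⟨X, d, π, h1, h2, h3, h4, h5⟩ := Res.toSeq h
    let G : ChainComplex (ModuleCat.{u} R) ℕ := ChainComplex.of X (fun i => ModuleCat.ofHom (d i))
      (fun i => by ext x; exact (h5 i).apply_apply_eq_zero x)
    have hd : ∀ i, G.d (i+1) i = ModuleCat.ofHom (d i) := fun i => ChainComplex.of_d (V := ModuleCat.{u} R) X (fun i => ModuleCat.ofHom (d i)) i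
    have hw : G.d 1 0 ≫ (ModuleCat.ofHom π : G.X 0 ⟶ M) = 0 := by
      rw [hd 0]
      ext x
      exact h4.apply_apply_eq_zero x
    refine ⟨G, ModuleCat.ofHom π, hw, h1, fun j hj => (isZero_iff R _).2 (h2 j hj), ?_⟩
    rw [augment_exact]
    refine ⟨h3, ?_, fun i => ?_⟩
    · rw [hd 0]; exact h4
    · rw [hd, hd]; exact h5 i

end complexes

lemma finite_of_semidualizing (hC : IsSemidualizing R C) : Module.Finite R C := by
  obtain ⟨⟨P, π, w, h1, h2⟩, -⟩ := hC
  rw [augment_exact] at h2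
  have := (h1 0).1
  exact Module.Finite.of_surjective π.hom h2.1

lemma main [IsNoetherianRing R] [Module.Finite R C] (M : Type u) [AddCommGroup M] [Module R M]
    (g : ℕ) (hM : Res (R := R) C (g+1) M) (hi : ∀ n, n ≠ g → Subsingleton (e R C n M)) :
    Res (R := R) C (g+1) (e R C g M) ∧ (∀ n, n ≠ g → Subsingleton (e R C n (e R C g M))) ∧
    Nonempty (M ≃ₗ[R] e R C g (e R C g M)) := by
  match g with
  | 0 =>
    have hM := Res.one hM
    obtain ⟨a⟩ := e_zero (R := R) C M
    refine ⟨Res.of (TR.congr (TR.dual hM) a.symm), fun n hn => ?_, ?_⟩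
    · obtain ⟨b⟩ := e_congr C n a
      have := TR.ext' hM n (by omega)
      exact b.injective.subsingleton
    · obtain ⟨b⟩ := e_congr C 0 a
      obtain ⟨c⟩ := e_zero (R := R) C (M →ₗ[R] C)
      exact ⟨LinearEquiv.ofBijective (ev R C M) hM.2.2.2 ≪≫ₗ c.symm ≪≫ₗ b.symm⟩
  | m+1 =>
    have hi' : ∀ i, 1 ≤ i → i < m+1 → Subsingleton (e R C i M) :=
      fun i _ h => hi i (by omega)
    have hs : Subsingleton (M →ₗ[R] C) := by
      obtain ⟨a⟩ := e_zero (R := R) C M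
      have := hi 0 (by omega)
      exact a.symm.injective.subsingleton
    have hs2 : Subsingleton ((M →ₗ[R] C) →ₗ[R] C) := inferInstance
    have A := claimA m M hM hi' 0 hs
    obtain ⟨h1, ⟨h2⟩, ⟨h3⟩, h4⟩ := claimB m M hM hi' (e R C (m+1) M) (LinearEquiv.refl R _)
    refine ⟨by rwa [show m+1+1 = 0+m+2 by omega], fun n hn => ?_, ?_⟩
    · rcases Nat.lt_or_ge n (m+1) with h | h
      · exact h1 n h
      · by_cases hn2 : n = m+2
        · subst hn2
          exact h3.injective.subsingleton
        · obtain ⟨k, rfl⟩ : ∃ k, n = m+k+3 := ⟨n-m-3, by omega⟩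
          obtain ⟨b⟩ := h4 k
          have := e_subsingleton (R := R) C k (M →ₗ[R] C)
          exact b.injective.subsingleton
    · have ht : LinearMap.ker (ev R C M) = ⊤ :=
        eq_top_iff.2 fun x _ => Subsingleton.elim (α := (M →ₗ[R] C) →ₗ[R] C) _ _
      exact ⟨(h2 ≪≫ₗ LinearEquiv.ofEq _ _ ht ≪≫ₗ Submodule.topEquiv).symm⟩

end S19

/-- Let `R` be a commutative noetherian ring, `C` a semidualizing
`R`-module, and `M` a nonzero finitely generated `R`-module that is `G_C`-perfect of
grade `g`. Then `Ext^g_R(M, C)` is a finitely generated `R`-module that is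
`G_C`-perfect of grade `g`, and `M ≅ Ext^g_R(Ext^g_R(M, C), C)` as `R`-modules. -/
theorem stmt19 [IsNoetherianRing R]
    (C : Type u) [AddCommGroup C] [Module R C] (hC : IsSemidualizing R C)
    (M : Type u) [AddCommGroup M] [Module R M] [Module.Finite R M] [Nontrivial M]
    (g : ℕ) (hM : IsGCPerfect R C (ModuleCat.of R M) g) :
    Module.Finite R (extMod R g (ModuleCat.of R M) (ModuleCat.of R C)) ∧
    IsGCPerfect R C (extMod R g (ModuleCat.of R M) (ModuleCat.of R C)) g ∧
    Nonempty (ModuleCat.of R M ≅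
      extMod R g (extMod R g (ModuleCat.of R M) (ModuleCat.of R C))
        (ModuleCat.of R C)) := by
  have := S19.finite_of_semidualizing hC
  obtain ⟨h1, h2⟩ := hM
  rw [S19.res_iff] at h1
  obtain ⟨a, b, ⟨c⟩⟩ := S19.main M g h1 (fun n hn => (S19.isZero_iff R _).1 (h2 n hn))
  exact ⟨S19.Res.finite a, ⟨(S19.res_iff _ _).2 a, fun n hn => (S19.isZero_iff R _).2 (b n hn)⟩,
    ⟨c.toModuleIso⟩⟩
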